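/- Let m, n ≥ 1 and let W be a social choice function for n agents over the alternatives [m] that is onto and strategyproof. Then for every B ⊊ [m], the social choice function W_{−B} over the alternatives [m]∖B, defined by W_{−B}(R_1,…,R_n) = W(R_1^{+B},…,R_n^{+B}) (whose values lie in [m]∖B), is onto [m]∖B and strategyproof. -/

import Mathlib

/-- A preference over `α`: a strict linear order, given as a relation that is
trichotomous, irreflexive and transitive. `σ.1 a b` means `a` is preferred to `b`. -/
def Pref (α : Type*) : Type _ :=
  {r : α → α → Prop //
    (∀ a b, r a b ∨ a = b ∨ r b a) ∧ (∀ a, ¬ r a a) ∧ (∀ a b c, r a b → r b c → r a c)}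

/-- Restriction `σ_{−B}` of a preference on `Fin m` to the alternatives outside `B`. -/
def restrictPref {m : ℕ} (B : Finset (Fin m)) (σ : Pref (Fin m)) :
    Pref {x : Fin m // x ∉ B} :=
  ⟨fun a b => σ.1 a.1 b.1, by
    obtain ⟨h1, h2, h3⟩ := σ.2
    refine ⟨fun a b => ?_, fun a => h2 a.1, fun a b c => h3 a.1 b.1 c.1⟩
    rcases h1 a.1 b.1 with h | h | h
    · exact Or.inl h
    · exact Or.inr (Or.inl (Subtype.ext h))
    · exact Or.inr (Or.inr h)⟩

/-- Extension `π^{+B}` of a preference `π` on `[m] ∖ B` to all of `Fin m`: it agrees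
with `π` outside `B`, places every alternative outside `B` before every alternative
in `B`, and orders `B` by the natural order on `Fin m`. -/
def extendPref {m : ℕ} (B : Finset (Fin m)) (π : Pref {x : Fin m // x ∉ B}) :
    Pref (Fin m) :=
  ⟨fun a b =>
    if ha : a ∈ B then b ∈ B ∧ a < b
    else if hb : b ∈ B then True
    else π.1 ⟨a, ha⟩ ⟨b, hb⟩, by
    obtain ⟨h1, h2, h3⟩ := π.2
    refine ⟨fun a b => ?_, fun a => ?_, fun a b c => ?_⟩
    · by_cases ha : a ∈ B <;> by_cases hb : b ∈ B <;> simp [ha, hb]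
      · rcases lt_trichotomy a b with h | h | h
        · exact Or.inl h
        · exact Or.inr (Or.inl h)
        · exact Or.inr (Or.inr h)
      · rcases h1 ⟨a, ha⟩ ⟨b, hb⟩ with h | h | h
        · exact Or.inl h
        · exact Or.inr (Or.inl (congrArg Subtype.val h))
        · exact Or.inr (Or.inr h)
    · by_cases ha : a ∈ B <;> simp [ha, h2]
    · by_cases ha : a ∈ B <;> by_cases hb : b ∈ B <;> by_cases hc : c ∈ B <;>
        simp [ha, hb, hc]
      · exact fun hab hbc => lt_trans hab hbc
      · exact fun hab hbc => h3 _ _ _ hab hbc⟩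

/-- Strategyproofness: no agent `i` can, by misreporting its preference as `π`,
obtain an outcome it strictly prefers (under its true preference `R i`). -/
def SCFStrategyproof {n : ℕ} {α : Type*} [DecidableEq (Fin n)]
    (W : (Fin n → Pref α) → α) : Prop :=
  ∀ (R : Fin n → Pref α) (i : Fin n) (π : Pref α),
    ¬ (R i).1 (W (Function.update R i π)) (W R)

/-- `a` is the most preferred element of the preference `σ`. -/
def PrefTop {α : Type*} (σ : Pref α) (a : α) : Prop := ∀ b, b ≠ a → σ.1 a b

/-- Some agent's top alternative is always the outcome of `W`. -/
def SCFDictatorial {n : ℕ} {α : Type*} (W : (Fin n → Pref α) → α) : Prop :=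
  ∃ i : Fin n, ∀ R : Fin n → Pref α, PrefTop (R i) (W R)

/-- If `S` contains some outcome of a strategyproof `W`, then the outcome lies in `S` at every
profile where all agents prefer each element of `S` to each element outside `S`. -/
theorem SCFStrategyproof.mem_of_forall_prefer {n : ℕ} {α : Type*}
    {W : (Fin n → Pref α) → α} (hsp : SCFStrategyproof W) {S : Set α}
    {R R' : Fin n → Pref α} (hR : W R ∈ S)
    (hR' : ∀ i, ∀ a ∈ S, ∀ b ∉ S, (R' i).1 a b) : W R' ∈ S := by
  have key : ∀ s : Finset (Fin n), W (s.piecewise R' R) ∈ S := by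
    intro s
    induction s using Finset.induction_on with
    | empty => simpa using hR
    | insert j s hj ih =>
      rw [Finset.piecewise_insert]
      by_contra hout
      apply hsp (Function.update (s.piecewise R' R) j (R' j)) j (s.piecewise R' R j)
      rw [Function.update_idem, Function.update_eq_self, Function.update_self]
      exact hR' j _ ih _ hout
  simpa using key Finset.univ

/-- Every element of a linear order is the top of some preference. -/
theorem exists_prefTop {α : Type*} [LinearOrder α] (a : α) : ∃ σ : Pref α, PrefTop σ a := by
  refine ⟨⟨fun x y => y ≠ a ∧ (x = a ∨ x < y), ?_, ?_, ?_⟩, fun b hb => ⟨hb, Or.inl rfl⟩⟩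
  · intro x y
    rcases lt_trichotomy x y with h | h | h <;> grind
  · grind
  · grind

theorem extendPref_apply_of_notMem_of_mem {m : ℕ} {B : Finset (Fin m)}
    (π : Pref {x : Fin m // x ∉ B}) {a b : Fin m} (ha : a ∉ B) (hb : b ∈ B) :
    (extendPref B π).1 a b := by
  simp [extendPref, ha, hb]

theorem extendPref_apply_coe {m : ℕ} {B : Finset (Fin m)}
    (π : Pref {x : Fin m // x ∉ B}) (a b : {x : Fin m // x ∉ B}) :
    (extendPref B π).1 a b ↔ π.1 a b := by
  simp [extendPref, a.2, b.2]

theorem PrefTop.extendPref {m : ℕ} {B : Finset (Fin m)} {π : Pref {x : Fin m // x ∉ B}}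
    {a : {x : Fin m // x ∉ B}} (h : PrefTop π a) : PrefTop (extendPref B π) (a : Fin m) := by
  intro b hba
  by_cases hb : b ∈ B
  · exact extendPref_apply_of_notMem_of_mem π a.2 hb
  · exact (extendPref_apply_coe π a ⟨b, hb⟩).2 (h _ fun hab => hba (congrArg Subtype.val hab))

theorem stmt18 (m n : ℕ) (hm : 1 ≤ m) (hn : 1 ≤ n)
    (W : (Fin n → Pref (Fin m)) → Fin m)
    (honto : Function.Surjective W) (hsp : SCFStrategyproof W)
    (B : Finset (Fin m)) (hB : B ⊂ Finset.univ) :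
    ∃ W' : (Fin n → Pref {x : Fin m // x ∉ B}) → {x : Fin m // x ∉ B},
      (∀ R, (W' R : Fin m) = W (fun i => extendPref B (R i))) ∧
      Function.Surjective W' ∧ SCFStrategyproof W' := by
  have hval : ∀ R : Fin n → Pref {x : Fin m // x ∉ B},
      W (fun i => extendPref B (R i)) ∉ B := by
    intro R
    obtain ⟨c, -, hc⟩ := Finset.exists_of_ssubset hB
    obtain ⟨Q, rfl⟩ := honto c
    exact hsp.mem_of_forall_prefer (S := {x | x ∉ B}) hc fun i a ha b hb =>
      extendPref_apply_of_notMem_of_mem (R i) ha (not_not.1 hb)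
  refine ⟨fun R => ⟨_, hval R⟩, fun R => rfl, fun a => ?_, fun R i π hlt => ?_⟩
  · obtain ⟨σ, hσ⟩ := exists_prefTop a
    obtain ⟨Q, hQ⟩ := honto a
    refine ⟨fun _ => σ, Subtype.ext ?_⟩
    refine hsp.mem_of_forall_prefer (S := {(a : Fin m)}) hQ fun _ x hx b hb => ?_
    rw [Set.mem_singleton_iff.1 hx]
    exact hσ.extendPref b hb
  · have hupd : (fun j => extendPref B (Function.update R i π j)) =
        Function.update (fun j => extendPref B (R j)) i (extendPref B π) :=
      funext (Function.apply_update (fun _ => extendPref B) R i π)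
    have h := (extendPref_apply_coe (R i) _ _).2 hlt
    simp only [hupd] at h
    exact hsp (fun j => extendPref B (R j)) i _ h
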